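/- Let σ ∈ (0,1], α ∈ (0,3/2) and σ < α < 1+σ. Then the Hardy inequality Q^σ(f) ≥ Σ_{n≥1} W_{α,σ}(n)·f(n)² holds for every finitely supported f : ℕ → ℝ. -/

import Mathlib

open Real Filter

/-- Generalized binomial coefficient via the Gamma function. -/
noncomputable def rbinom (a b : ℝ) : ℝ :=
  Real.Gamma (a + 1) / (Real.Gamma (b + 1) * Real.Gamma (a - b + 1))

/-- Kernel of the fractional Laplacian `(-Δ_ℕ)^σ` on the discrete half-line. -/
noncomputable def Kker (σ : ℝ) (m n : ℕ) : ℝ :=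
  (-1 : ℝ) ^ (m + n) *
    (rbinom (2 * σ) (σ + m - n) - rbinom (2 * σ) (σ + m + n))

/-- Quadratic form of `(-Δ_ℕ)^σ` (used for finitely supported `f` with `f 0 = 0`). -/
noncomputable def Qform (σ : ℝ) (f : ℕ → ℝ) : ℝ :=
  ∑' m : ℕ, ∑' n : ℕ, Kker σ m n * f m * f n

/-- The Hardy-weight `W_{α,σ}`. -/
noncomputable def Wweight (σ α : ℝ) (n : ℕ) : ℝ :=
  4 ^ σ * (Real.Gamma (3/2 - α + σ) * Real.Gamma α /
            (Real.Gamma (α - σ) * Real.Gamma (3/2 - α))) *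
    (Real.Gamma (n + α - σ - 1) * Real.Gamma (n - α + 2) /
      (Real.Gamma (n - α + σ + 2) * Real.Gamma (n + α - 1)))

/-- The Riesz potential `I_α`. -/
noncomputable def Riesz (α : ℝ) (n : ℕ) : ℝ :=
  (4 * n / (4 ^ α * Real.sqrt 2)) * Real.Gamma (3/2 - α) *
    Real.Gamma (n + α - 1) / (Real.Gamma α * Real.Gamma (n - α + 2))


/-- The convolution kernel on the integers. -/
noncomputable def kk (σ : ℝ) (j : ℤ) : ℝ := (-1 : ℝ) ^ j * rbinom (2 * σ) (σ + j)

lemma kk_neg (σ : ℝ) (j : ℤ) : kk σ (-j) = kk σ j := by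
  unfold kk rbinom
  have h : (-1 : ℝ) ^ (-j) = (-1 : ℝ) ^ j := by
    rw [zpow_neg, ← inv_zpow]; norm_num
  rw [h]
  push_cast
  rw [show 2 * σ - (σ + -(j:ℝ)) + 1 = σ + j + 1 by ring,
    show 2 * σ - (σ + (j:ℝ)) + 1 = σ + -j + 1 by ring, mul_comm (Real.Gamma (σ + -(j:ℝ) + 1))]

lemma ne_int_aux {σ : ℝ} (h0 : 0 < σ) (h1 : σ < 1) (j : ℤ) : σ + j ≠ 0 := by
  intro h
  have h2 : (j : ℝ) < 0 := by linarith
  have h3 : (-1 : ℝ) < j := by linarith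
  have h4 : j < 0 := by exact_mod_cast h2
  have h5 : -1 < j := by exact_mod_cast h3
  omega

lemma kk_succ {σ : ℝ} (h0 : 0 < σ) (h1 : σ < 1) (j : ℤ) :
    kk σ (j + 1) * (j + σ + 1) = kk σ j * (j - σ) := by
  unfold kk rbinom
  have e1 : σ + (j:ℝ) + 1 ≠ 0 := by
    have := ne_int_aux h0 h1 (j + 1); push_cast at this; rwa [← add_assoc] at this
  have e2 : σ - (j:ℝ) ≠ 0 := by
    have := ne_int_aux h0 h1 (-j); push_cast at this; rwa [← sub_eq_add_neg] at this
  have g1 : Real.Gamma (σ + ((j+1 : ℤ):ℝ) + 1) = (σ + j + 1) * Real.Gamma (σ + j + 1) := by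
    rw [← Real.Gamma_add_one e1]; push_cast; ring_nf
  have g2 : Real.Gamma (2 * σ - (σ + (j:ℝ)) + 1) = (σ - j) * Real.Gamma (σ - j) := by
    rw [← Real.Gamma_add_one e2]; ring_nf
  have g3 : Real.Gamma (2 * σ - (σ + ((j+1 : ℤ):ℝ)) + 1) = Real.Gamma (σ - j) := by
    push_cast; ring_nf
  rw [g1, g2, g3, zpow_add_one₀ (by norm_num)]
  have n1 : Real.Gamma (σ + j + 1) ≠ 0 := by
    apply Real.Gamma_ne_zero
    intro m hm
    have := ne_int_aux h0 h1 (j + 1 + m); push_cast at this; apply this; linarith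
  have n2 : Real.Gamma (σ - j) ≠ 0 := by
    apply Real.Gamma_ne_zero
    intro m hm
    have := ne_int_aux h0 h1 (- j + m); push_cast at this; apply this; linarith
  field_simp
  ring

lemma Kker_eq (σ : ℝ) (m n : ℕ) :
    Kker σ m n = kk σ ((n : ℤ) - m) - kk σ ((n : ℤ) + m) := by
  rw [← kk_neg σ ((n : ℤ) - m)]
  unfold Kker kk
  have h1 : (-1 : ℝ) ^ (-((n : ℤ) - m)) = (-1 : ℝ) ^ (m + n) := by
    have : (-((n : ℤ) - m)) = ((m + n : ℕ) : ℤ) - ((2 * n : ℕ) : ℤ) := by push_cast; ring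
    rw [this, zpow_sub₀ (by norm_num), zpow_natCast, zpow_natCast, pow_mul]; norm_num
  have h2 : (-1 : ℝ) ^ ((n : ℤ) + m) = (-1 : ℝ) ^ (m + n) := by
    rw [add_comm, ← Nat.cast_add, zpow_natCast]
  rw [h1, h2]
  push_cast
  rw [show σ + -((n:ℝ) - m) = σ + m - n by ring, show σ + ((n:ℝ) + m) = σ + m + n by ring]
  ring

lemma kk_zero_pos {σ : ℝ} (h0 : 0 < σ) : 0 < kk σ 0 := by
  unfold kk rbinom
  simp only [zpow_zero, one_mul, Int.cast_zero, add_zero]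
  have := Real.Gamma_pos_of_pos (show 0 < 2 * σ + 1 by linarith)
  have := Real.Gamma_pos_of_pos (show 0 < σ + 1 by linarith)
  have := Real.Gamma_pos_of_pos (show 0 < 2 * σ - σ + 1 by linarith)
  positivity

lemma kk_succ_nat {σ : ℝ} (h0 : 0 < σ) (h1 : σ < 1) (j : ℕ) :
    kk σ ((j:ℤ) + 1) * (j + σ + 1) = kk σ j * (j - σ) := by
  have := kk_succ h0 h1 j
  simpa using this

lemma kk_nonpos {σ : ℝ} (h0 : 0 < σ) (h1 : σ < 1) (i : ℕ) : kk σ ((i:ℤ) + 1) < 0 := by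
  induction i with
  | zero =>
    have := kk_succ_nat h0 h1 0
    have h := kk_zero_pos h0
    simp only [Nat.cast_zero] at this ⊢
    by_contra hc
    push Not at hc
    nlinarith [mul_nonneg hc (show (0:ℝ) ≤ 0 + σ + 1 by linarith)]
  | succ i ih =>
    have := kk_succ_nat h0 h1 (i+1)
    push_cast at this ⊢
    by_contra hc
    push Not at hc
    have hi : (0:ℝ) ≤ i := Nat.cast_nonneg i
    nlinarith [mul_nonneg hc (show (0:ℝ) ≤ i + 1 + σ + 1 by linarith),
      mul_pos (neg_pos.2 ih) (show (0:ℝ) < i + 1 - σ by linarith)]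

/-- one-step difference bound -/
lemma kk_step {σ : ℝ} (h0 : 0 < σ) (h1 : σ < 1) (i : ℕ) :
    0 ≤ kk σ ((i:ℤ) + 2) - kk σ ((i:ℤ) + 1) ∧
    kk σ ((i:ℤ) + 2) - kk σ ((i:ℤ) + 1) ≤ 3 * (-kk σ ((i:ℤ)+1)) / (i + 1) := by
  have h := kk_succ_nat h0 h1 (i+1)
  have hn := kk_nonpos h0 h1 i
  push_cast at h
  rw [show (i:ℤ) + 1 + 1 = i + 2 by ring] at h
  have hi : (0:ℝ) ≤ i := Nat.cast_nonneg i
  have hp : (0:ℝ) < i + 1 + σ + 1 := by linarith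
  have e : kk σ ((i:ℤ) + 2) - kk σ ((i:ℤ) + 1) = (2*σ+1) * (-kk σ ((i:ℤ)+1)) / (i + 1 + σ + 1) := by
    rw [eq_div_iff hp.ne']; linear_combination h
  have hk : 0 < -kk σ ((i:ℤ)+1) := by linarith
  rw [e]
  constructor
  · positivity
  · gcongr <;> linarith

lemma kk_mono {σ : ℝ} (h0 : 0 < σ) (h1 : σ < 1) (i l : ℕ) :
    kk σ ((i:ℤ) + 1) ≤ kk σ ((i:ℤ) + 1 + l) := by
  induction l with
  | zero => simp
  | succ l ih =>
    have := (kk_step h0 h1 (i + l)).1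
    push_cast at this ⊢
    rw [show (i:ℤ) + 1 + (l + 1) = i + l + 2 by ring]
    rw [show (i:ℤ) + 1 + l = i + l + 1 by ring] at ih
    linarith

lemma kk_diff {σ : ℝ} (h0 : 0 < σ) (h1 : σ < 1) (i l : ℕ) :
    kk σ ((i:ℤ) + 1 + l) - kk σ ((i:ℤ) + 1) ≤ l * (3 * (-kk σ ((i:ℤ)+1)) / (i + 1)) := by
  induction l with
  | zero => simp
  | succ l ih =>
    have h := (kk_step h0 h1 (i + l)).2
    have hm := kk_mono h0 h1 i l
    have hn := kk_nonpos h0 h1 (i + l)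
    push_cast at h hn ⊢
    rw [show (i:ℤ) + 1 + (l + 1) = i + l + 2 by ring]
    rw [show (i:ℤ) + 1 + l = i + l + 1 by ring] at ih hm
    have : 3 * (-kk σ ((i:ℤ) + l +1)) / ((i:ℝ) + l + 1) ≤ 3 * (-kk σ ((i:ℤ)+1)) / (i + 1) := by
      apply div_le_div₀ <;> first | positivity | linarith
    linarith

lemma kk_summable {σ : ℝ} (h0 : 0 < σ) (h1 : σ < 1) :
    Summable (fun i : ℕ => -kk σ ((i:ℤ) + 1)) := by
  refine summable_of_sum_range_le (c := (-(1 + σ) * kk σ 1) / (2 * σ))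
    (fun i => by linarith [kk_nonpos h0 h1 i]) ?_
  intro N
  have key : ∑ i ∈ Finset.range N, -kk σ ((i:ℤ) + 1) =
      (-(1 + σ) * kk σ 1 + (N + 1 + σ) * kk σ ((N:ℤ) + 1)) / (2 * σ) := by
    induction N with
    | zero => simp; ring
    | succ N ih =>
      rw [Finset.sum_range_succ, ih]
      have h := kk_succ_nat h0 h1 (N+1)
      push_cast at h ⊢
      field_simp
      linear_combination -h
  rw [key]
  have := kk_nonpos h0 h1 N
  gcongr
  have hi : (0:ℝ) ≤ N := Nat.cast_nonneg N
  nlinarith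

lemma Kker_symm (σ : ℝ) (m n : ℕ) : Kker σ m n = Kker σ n m := by
  rw [Kker_eq, Kker_eq, ← kk_neg σ ((n:ℤ) - m), neg_sub, add_comm]

lemma Kker_nonpos {σ : ℝ} (h0 : 0 < σ) (h1 : σ < 1) {m n : ℕ} (h : m ≠ n) :
    Kker σ m n ≤ 0 := by
  wlog hmn : m < n generalizing m n
  · rw [Kker_symm]; exact this h.symm (by omega)
  rw [Kker_eq]
  obtain ⟨i, rfl⟩ := Nat.exists_eq_add_of_lt hmn
  have := kk_mono h0 h1 i (2 * m)
  push_cast at this ⊢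
  rw [show (m:ℤ) + i + 1 - m = i + 1 by ring, show (m:ℤ) + i + 1 + m = i + 1 + 2 * m by ring]
  linarith

lemma Kker_summable {σ : ℝ} (h0 : 0 < σ) (h1 : σ < 1) (m : ℕ) :
    Summable (fun i : ℕ => |Kker σ m (i + 1)| * ((i:ℝ) + 1)) := by
  rw [← summable_nat_add_iff m]
  refine Summable.of_nonneg_of_le (fun i => by positivity) ?_
    ((kk_summable h0 h1).mul_left (6 * (m:ℝ) * (m + 1)))
  intro i
  have hd := kk_diff h0 h1 i (2 * m)
  have hk := kk_nonpos h0 h1 i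
  have hK := Kker_nonpos h0 h1 (m := m) (n := i + m + 1) (by omega)
  rw [abs_of_nonpos hK, Kker_eq]
  push_cast at hd ⊢
  rw [show (i:ℤ) + m + 1 - m = i + 1 by ring, show (i:ℤ) + m + 1 + m = i + 1 + 2 * m by ring]
  have hi : (0:ℝ) ≤ i := Nat.cast_nonneg i
  have hm : (0:ℝ) ≤ m := Nat.cast_nonneg m
  calc _ ≤ (2 * m * (3 * (-kk σ ((i:ℤ)+1)) / (i + 1))) * ((i:ℝ) + m + 1) := by
        gcongr; linarith
    _ ≤ (2 * m * (3 * (-kk σ ((i:ℤ)+1)) / (i + 1))) * ((m + 1) * (i + 1)) := by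
        have : 0 ≤ 3 * (-kk σ ((i:ℤ)+1)) / ((i:ℝ) + 1) := by
          apply div_nonneg <;> linarith
        gcongr
        nlinarith
    _ = _ := by field_simp; ring

/-- normalized ground state divided by the index -/
noncomputable def PP (α : ℝ) (i : ℕ) : ℝ := ∏ j ∈ Finset.range i, (α + j) / (3 - α + j)

lemma PP_succ (α : ℝ) (i : ℕ) : PP α (i + 1) = PP α i * ((α + i) / (3 - α + i)) := by
  unfold PP; rw [Finset.prod_range_succ]

lemma PP_abs_le {α : ℝ} (h : α ≤ 3/2) (i : ℕ) : |PP α i| ≤ 1 := by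
  unfold PP
  rw [Finset.abs_prod]
  apply Finset.prod_le_one
  · intros; positivity
  · intro j _
    have hj : (0:ℝ) ≤ j := Nat.cast_nonneg j
    rw [abs_div, abs_of_pos (show 0 < 3 - α + j by linarith), div_le_one (by linarith), abs_le]
    constructor <;> linarith

lemma PP_shift {α : ℝ} (h : α < 3) (i : ℕ) :
    (1 - α) * (3 - α) * PP α i = -(((i:ℝ)+1)^2 - (2 - α)^2) * PP (α - 1) i := by
  induction i with
  | zero => simp [PP]; ring
  | succ i ih =>
    rw [PP_succ, PP_succ]
    have hj : (0:ℝ) ≤ i := Nat.cast_nonneg i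
    have h1 : 3 - α + i ≠ 0 := by linarith
    have h2 : 3 - (α - 1) + i ≠ 0 := by linarith
    rw [← mul_assoc, ih]
    push_cast
    field_simp
    ring

lemma raabe_zero {x r : ℕ → ℝ} {c : ℝ} (hc : c < 0)
    (hx : ∀ n, x (n+1) = r n * x n)
    (h : Tendsto (fun n : ℕ => (n:ℝ) * (r n - 1)) atTop (nhds c)) :
    Tendsto x atTop (nhds 0) := by
  set δ := -c/2 with hδ
  have hδ0 : 0 < δ := by rw [hδ]; linarith
  have h1 : ∀ᶠ n : ℕ in atTop, (n:ℝ) * (r n - 1) < -δ :=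
    h.eventually_lt_const (by rw [hδ]; linarith)
  have h2 : ∀ᶠ n : ℕ in atTop, 2 * c < (n:ℝ) * (r n - 1) :=
    h.eventually_const_lt (by linarith)
  obtain ⟨N, hN⟩ := eventually_atTop.1 (h1.and h2)
  obtain ⟨N', hN'⟩ := exists_nat_gt (-2 * c)
  set n0 := max (max N N') 1 with hn0
  set Q : ℕ → ℝ := fun n => 1 + δ * ∑ j ∈ Finset.range n, 1 / ((j:ℝ) + 1) with hQ
  have hQ1 : ∀ n, 1 ≤ Q n := by
    intro n
    simp only [hQ]
    have : 0 ≤ ∑ j ∈ Finset.range n, 1 / ((j:ℝ) + 1) :=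
      Finset.sum_nonneg (fun j _ => by positivity)
    nlinarith
  have hQs : ∀ n, Q (n+1) = Q n + δ / (n + 1) := by
    intro n
    simp only [hQ, Finset.sum_range_succ]; ring
  have hQt : Tendsto Q atTop atTop :=
    tendsto_atTop_add_const_left _ _
      (Real.tendsto_sum_range_one_div_nat_succ_atTop.const_mul_atTop hδ0)
  have hanti : ∀ n, n0 ≤ n → |x n| * Q n ≤ |x n0| * Q n0 := by
    intro n hn
    induction n, hn using Nat.le_induction with
    | base => exact le_rfl
    | succ n hn ih =>
      refine le_trans ?_ ih
      obtain ⟨a1, a2⟩ := hN n (le_trans (le_trans (le_max_left _ _) (le_max_left _ _)) hn)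
      have hnN' : (N':ℝ) ≤ n := by
        exact_mod_cast le_trans (le_trans (le_max_right _ _) (le_max_left _ _)) hn
      have hn1 : (1:ℝ) ≤ n := by exact_mod_cast le_trans (le_max_right _ _) hn
      have hrpos : 0 ≤ r n := by
        by_contra hneg
        push Not at hneg
        nlinarith
      set d := δ / ((n:ℝ) + 1) with hd
      have hd0 : 0 < d := by positivity
      have hdd : d * (n + 1) = δ := by rw [hd]; field_simp
      have hr : r n ≤ 1 - d := by
        by_contra hcon
        push Not at hcon
        nlinarith
      rw [hx, abs_mul, abs_of_nonneg hrpos, hQs, ← hd]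
      have q1 := hQ1 n
      have : r n * (Q n + d) ≤ Q n := by
        have : r n * (Q n + d) ≤ (1 - d) * (Q n + d) := by gcongr
        nlinarith [mul_nonneg hd0.le hd0.le, mul_le_mul_of_nonneg_left q1 hd0.le]
      calc r n * |x n| * (Q n + d) = |x n| * (r n * (Q n + d)) := by ring
        _ ≤ _ := by gcongr
  rw [tendsto_zero_iff_abs_tendsto_zero]
  have hlim : Tendsto (fun n => |x n0| * Q n0 / Q n) atTop (nhds 0) :=
    hQt.const_div_atTop _
  refine squeeze_zero' (Eventually.of_forall fun n => abs_nonneg _) ?_ hlim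
  filter_upwards [eventually_ge_atTop n0] with n hn
  have := hQ1 n
  simp only [Function.comp]
  rw [le_div_iff₀ (by linarith)]
  exact hanti n hn

lemma raabe_lin (a b : ℝ) :
    Tendsto (fun n : ℕ => (n:ℝ) * ((a + n) / (b + n) - 1)) atTop (nhds (a - b)) := by
  have h1 : Tendsto (fun n : ℕ => (a - b) - (a - b) * b / ((n:ℝ) + b)) atTop (nhds ((a - b) - 0)) :=
    tendsto_const_nhds.sub ((tendsto_atTop_add_const_right _ _
      tendsto_natCast_atTop_atTop).const_div_atTop _)
  rw [sub_zero] at h1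
  refine h1.congr' ?_
  filter_upwards [tendsto_natCast_atTop_atTop.eventually_gt_atTop (-b)] with n hn
  have : (n:ℝ) + b ≠ 0 := by linarith
  have : b + (n:ℝ) ≠ 0 := by linarith
  field_simp
  ring

lemma raabe_mul {r r' : ℕ → ℝ} {c c' : ℝ}
    (h : Tendsto (fun n : ℕ => (n:ℝ) * (r n - 1)) atTop (nhds c))
    (h' : Tendsto (fun n : ℕ => (n:ℝ) * (r' n - 1)) atTop (nhds c')) :
    Tendsto (fun n : ℕ => (n:ℝ) * (r n * r' n - 1)) atTop (nhds (c + c')) := by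
  have h0 : Tendsto (fun n : ℕ => (r' n - 1)) atTop (nhds 0) := by
    have := h'.mul (tendsto_inv_atTop_nhds_zero_nat (𝕜 := ℝ))
    rw [mul_zero] at this
    refine this.congr' ?_
    filter_upwards [eventually_gt_atTop 0] with n hn
    have : (n:ℝ) ≠ 0 := by positivity
    field_simp
  have h1 := (h.mul (h0.add_const 1)).add h'
  rw [zero_add, mul_one] at h1
  refine h1.congr fun n => ?_
  ring

lemma x_tendsto {σ α : ℝ} (h0 : 0 < σ) (h1 : σ < 1) (hα : α < 1 + σ) (l : ℤ) :
    Tendsto (fun i : ℕ => PP (α - 1) i * ((i:ℝ)+1)^4 * kk σ ((i:ℤ) + 1 + l)) atTop (nhds 0) := by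
  have e := raabe_lin 2 1
  refine raabe_zero (c := ((α - 1) - (4 - α)) + ((((2 - 1) + (2 - 1)) + ((2-1)+(2-1)) +
    ((1 + l - σ) - (2 + l + σ))))) (r := fun i =>
    ((α - 1 + i) / (4 - α + i)) * ((((2 + i) / (1 + i)) * ((2 + i) / (1 + i))) * (((2 + i) / (1 + i)) *
    ((2 + i) / (1 + i))) *
      ((1 + l - σ + i) / (2 + l + σ + i)))) (by linarith) ?_
    (raabe_mul (raabe_lin _ _) (raabe_mul (raabe_mul (raabe_mul e e) (raabe_mul e e)) (raabe_lin _ _)))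
  intro n
  have hk := kk_succ h0 h1 ((n:ℤ) + 1 + l)
  have hn : (2 + l + σ + (n:ℝ)) ≠ 0 := by
    have := ne_int_aux h0 h1 (2 + l + n)
    push_cast at this
    intro hc; apply this; linarith
  have hk' : kk σ ((n:ℤ) + 1 + l + 1) = kk σ ((n:ℤ) + 1 + l) * ((1 + l - σ + n) / (2 + l + σ + n)) := by
    push_cast at hk
    rw [← mul_div_assoc, eq_div_iff hn]
    linear_combination hk
  rw [PP_succ, show ((n+1:ℕ):ℤ) + 1 + l = (n:ℤ) + 1 + l + 1 by push_cast; ring, hk',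
    show 3 - (α - 1) = 4 - α by ring]
  have : (1 + (n:ℝ)) ≠ 0 := by positivity
  have e4 : ((((n+1:ℕ):ℝ)) + 1)^4 = ((2 + n) / (1 + n)) * ((2 + n) / (1 + n)) * (((2 + n) / (1 + n)) *
    ((2 + n) / (1 + n))) * ((n:ℝ)+1)^4 := by
    push_cast
    field_simp
    ring
  rw [e4]
  ring

/-- the certificate polynomial (times 4) -/
noncomputable def qc (σ α m n : ℝ) : ℝ :=
  (2 * (2 - α + σ) - 1) * (n^2 - n) + (1 - α) * (m * (2 * n - 1) - σ)

/-- the telescoping certificate -/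
noncomputable def HH (σ α : ℝ) (m : ℕ) (i : ℕ) : ℝ :=
  PP (α - 1) i * ((i:ℝ) + 3 - α) *
    (kk σ ((i:ℤ) + 1 - m) * ((i:ℝ) + 1 - m + σ) * qc σ α m (i + 1)
      - kk σ ((i:ℤ) + 1 + m) * ((i:ℝ) + 1 + m + σ) * qc σ α m (-i))

lemma HH_tendsto {σ α : ℝ} (h0 : 0 < σ) (h1 : σ < 1) (hα : α < 1 + σ) (m : ℕ) :
    Tendsto (HH σ α m) atTop (nhds 0) := by
  have hs : Tendsto (fun n : ℕ => 1 / ((n:ℝ) + 1)) atTop (nhds 0) :=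
    tendsto_one_div_add_atTop_nhds_zero_nat
  have t1 := (Continuous.tendsto (show Continuous (fun s : ℝ => (1 + (2 - α) * s) * (1 + (σ - m) * s) *
      ((2 * (2 - α + σ) - 1) * (1 - s) + (1 - α) * (m * (2 * s - s^2) - σ * s^2))) by fun_prop) 0).comp hs
  have t2 := (Continuous.tendsto (show Continuous (fun s : ℝ => (1 + (2 - α) * s) * (1 + (σ + m) * s) *
      ((2 * (2 - α + σ) - 1) * (1 - s) + (1 - α) * (m * (s^2 - 2 * s) - σ * s^2))) by fun_prop) 0).comp hs
  have := ((x_tendsto h0 h1 hα (-m)).mul t1).sub ((x_tendsto h0 h1 hα m).mul t2)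
  rw [zero_mul, zero_mul, sub_zero] at this
  refine this.congr fun n => ?_
  have hn : (n:ℝ) + 1 ≠ 0 := by positivity
  simp only [HH, qc, ← sub_eq_add_neg, Function.comp]
  field_simp
  ring

lemma HH_zero {σ α : ℝ} (h0 : 0 < σ) (h1 : σ < 1) (m : ℕ) : HH σ α m 0 = 0 := by
  have a := kk_succ h0 h1 m
  have b := kk_succ h0 h1 (-m)
  simp only [HH, qc, Nat.cast_zero]
  rw [show (0:ℤ) + 1 - m = -m + 1 by ring, show (0:ℤ) + 1 + m = m + 1 by ring]
  rw [kk_neg] at b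
  push_cast at a b
  rw [show kk σ (-(m:ℤ) + 1) * ((0:ℝ) + 1 - m + σ) = kk σ m * (-m - σ) by linear_combination b,
    show kk σ ((m:ℤ) + 1) * ((0:ℝ) + 1 + m + σ) = kk σ m * (m - σ) by linear_combination a]
  ring

lemma HH_step {σ α : ℝ} (h0 : 0 < σ) (h1 : σ < 1) (hα : α < 3) (m i : ℕ) :
    HH σ α m (i+1) - HH σ α m i = 4 * (Kker σ m (i+1) * ((i:ℝ) + 1) *
      ((1 - (α - σ)) * (3/2 - (α - σ)) * ((1 - α) * (3 - α) * PP α i) +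
       (1 - α) * ((m:ℝ)^2 - (2 - (α - σ))^2) * (3/2 - α) * PP (α - 1) i)) := by
  have a := kk_succ h0 h1 ((i:ℤ) + 1 + m)
  have b := kk_succ h0 h1 ((i:ℤ) + 1 - m)
  rw [PP_shift hα, Kker_eq]
  simp only [HH, qc]
  rw [PP_succ]
  push_cast at a b ⊢
  have hi : (0:ℝ) ≤ i := Nat.cast_nonneg i
  have hd : (i:ℝ) + 1 + 3 - α ≠ 0 := by linarith
  have hP : PP (α - 1) i * ((α - 1 + i) / (3 - (α - 1) + i)) * ((i:ℝ) + 1 + 3 - α)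
      = PP (α - 1) i * (α - 1 + i) := by
    rw [show 3 - (α - 1) + (i:ℝ) = (i:ℝ) + 1 + 3 - α by ring]
    field_simp
  rw [hP, show (i:ℤ) + 1 + 1 - m = i + 1 - m + 1 by ring,
    show (i:ℤ) + 1 + 1 + m = i + 1 + m + 1 by ring,
    show kk σ ((i:ℤ) + 1 - m + 1) * ((i:ℝ) + 1 + 1 - m + σ) =
      kk σ ((i:ℤ) + 1 - m) * (i + 1 - m - σ) by linear_combination b,
    show kk σ ((i:ℤ) + 1 + m + 1) * ((i:ℝ) + 1 + 1 + m + σ) =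
      kk σ ((i:ℤ) + 1 + m) * (i + 1 + m - σ) by linear_combination a]
  ring

/-- the sum -/
noncomputable def SS (σ : ℝ) (m : ℕ) (α : ℝ) : ℝ :=
  ∑' i : ℕ, Kker σ m (i + 1) * ((i:ℝ) + 1) * PP α i

lemma SS_summable {σ α : ℝ} (h0 : 0 < σ) (h1 : σ < 1) (m : ℕ) (hα : α ≤ 3/2) :
    Summable (fun i : ℕ => Kker σ m (i + 1) * ((i:ℝ) + 1) * PP α i) := by
  refine Summable.of_norm_bounded (Kker_summable h0 h1 m) fun i => ?_
  rw [Real.norm_eq_abs, abs_mul, abs_mul, abs_of_nonneg (show (0:ℝ) ≤ (i:ℝ) + 1 by positivity)]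
  exact mul_le_of_le_one_right (by positivity) (PP_abs_le hα i)

lemma SS_rec {σ α : ℝ} (h0 : 0 < σ) (h1 : σ < 1) (m : ℕ) (hα : α ≤ 3/2) (hα1 : α < 1 + σ)
    (hne : α ≠ 1) :
    (1 - (α - σ)) * (3/2 - (α - σ)) * (3 - α) * SS σ m α =
      -((m:ℝ)^2 - (2 - (α - σ))^2) * (3/2 - α) * SS σ m (α - 1) := by
  have s1 := (SS_summable h0 h1 m hα).hasSum.mul_left
    ((1 - (α - σ)) * (3/2 - (α - σ)) * ((1 - α) * (3 - α)))
  have s2 := (SS_summable h0 h1 m (show α - 1 ≤ 3/2 by linarith)).hasSum.mul_left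
    ((1 - α) * ((m:ℝ)^2 - (2 - (α - σ))^2) * (3/2 - α))
  have s3 := ((s1.add s2).mul_left 4).tendsto_sum_nat
  have s4 : Tendsto (HH σ α m) atTop (nhds 0) := HH_tendsto h0 h1 hα1 m
  have := tendsto_nhds_unique s3 (s4.congr fun n => ?_)
  · change 4 * (_ * SS σ m α + _ * SS σ m (α - 1)) = 0 at this
    have h' : (1 - α) * ((1 - (α - σ)) * (3/2 - (α - σ)) * (3 - α) * SS σ m α) =
      (1 - α) * (-((m:ℝ)^2 - (2 - (α - σ))^2) * (3/2 - α) * SS σ m (α - 1)) := by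
      linear_combination this / 4
    exact mul_left_cancel₀ (sub_ne_zero.2 hne.symm) h'
  · rw [← sub_zero (HH σ α m n), ← HH_zero (α := α) h0 h1 m, ← Finset.sum_range_sub]
    refine Finset.sum_congr rfl fun i _ => ?_
    rw [HH_step h0 h1 (by linarith)]
    ring

/-- Pochhammer product -/
noncomputable def ph (a : ℝ) (i : ℕ) : ℝ := ∏ j ∈ Finset.range i, (a + j)

lemma ph_succ (a : ℝ) (i : ℕ) : ph a (i + 1) = ph a i * (a + i) := by
  unfold ph; rw [Finset.prod_range_succ]

lemma ph_shift (b : ℝ) (i : ℕ) : ph (b - 1) i * (b - 1 + i) = (b - 1) * ph b i := by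
  rw [← ph_succ]
  unfold ph
  rw [Finset.prod_range_succ', mul_comm]
  simp only [Nat.cast_zero, add_zero]
  congr 1
  apply Finset.prod_congr rfl
  intro j _
  push_cast; ring

lemma Gamma_ph {a : ℝ} (ha : 0 < a) (i : ℕ) : Real.Gamma (a + i) = ph a i * Real.Gamma a := by
  induction i with
  | zero => simp [ph]
  | succ i ih =>
    have : a + (i:ℝ) ≠ 0 := by positivity
    rw [ph_succ, show a + ((i+1:ℕ):ℝ) = a + i + 1 by push_cast; ring, Real.Gamma_add_one this, ih]
    ring

/-- closed form -/
noncomputable def ss (σ : ℝ) (i : ℕ) (α : ℝ) : ℝ :=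
  4 ^ σ * ((i:ℝ) + 1) * ph (α - σ) i * (Real.Gamma (3/2 - α + σ) * Real.Gamma (3 - α) /
    (Real.Gamma (3/2 - α) * Real.Gamma (i + 3 - α + σ)))

lemma ss_rec {σ α : ℝ} (h0 : 0 < σ) (hα : α < 3/2) (i : ℕ) :
    (1 - (α - σ)) * (3/2 - (α - σ)) * (3 - α) * ss σ i α =
      -((((i+1:ℕ):ℝ))^2 - (2 - (α - σ))^2) * (3/2 - α) * ss σ i (α - 1) := by
  have hi : (0:ℝ) ≤ i := Nat.cast_nonneg i
  have p1 : 0 < 3/2 - α + σ := by linarith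
  have p2 : 0 < 3 - α := by linarith
  have p3 : 0 < 3/2 - α := by linarith
  have p4 : 0 < i + 3 - α + σ := by linarith
  have g1 : Real.Gamma (3/2 - (α - 1) + σ) = (3/2 - α + σ) * Real.Gamma (3/2 - α + σ) := by
    rw [← Real.Gamma_add_one p1.ne']; ring_nf
  have g2 : Real.Gamma (3 - (α - 1)) = (3 - α) * Real.Gamma (3 - α) := by
    rw [← Real.Gamma_add_one p2.ne']; ring_nf
  have g3 : Real.Gamma (3/2 - (α - 1)) = (3/2 - α) * Real.Gamma (3/2 - α) := by
    rw [← Real.Gamma_add_one p3.ne']; ring_nf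
  have g4 : Real.Gamma (i + 3 - (α - 1) + σ) = (i + 3 - α + σ) * Real.Gamma (i + 3 - α + σ) := by
    rw [← Real.Gamma_add_one p4.ne']; ring_nf
  have hp := ph_shift (α - σ) i
  have G1 := Real.Gamma_pos_of_pos p1
  have G2 := Real.Gamma_pos_of_pos p2
  have G3 := Real.Gamma_pos_of_pos p3
  have G4 := Real.Gamma_pos_of_pos p4
  unfold ss
  rw [g1, g2, g3, g4, show α - 1 - σ = α - σ - 1 by ring]
  generalize Real.Gamma (3/2 - α + σ) = A1 at *
  generalize Real.Gamma (3 - α) = A2 at *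
  generalize Real.Gamma (3/2 - α) = A3 at *
  generalize Real.Gamma (i + 3 - α + σ) = A4 at *
  have e : (3 / 2 - α + σ) * A1 * ((3 - α) * A2) / ((3 / 2 - α) * A3 * ((↑i + 3 - α + σ) * A4)) =
     (3 / 2 - α + σ) * (3 - α) / ((3 / 2 - α) * (i + 3 - α + σ)) * (A1 * A2 / (A3 * A4)) := by
    rw [div_mul_div_comm]; congr 1 <;> ring
  rw [e]
  generalize A1 * A2 / (A3 * A4) = A
  have n3 := p3.ne'
  have n4 := p4.ne'
  have hr : (3 / 2 - α + σ) * (3 - α) / ((3 / 2 - α) * (i + 3 - α + σ)) *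
      ((3 / 2 - α) * (i + 3 - α + σ)) = (3 / 2 - α + σ) * (3 - α) :=
    div_mul_cancel₀ _ (mul_ne_zero n3 n4)
  generalize (3 / 2 - α + σ) * (3 - α) / ((3 / 2 - α) * (i + 3 - α + σ)) = r at *
  push_cast
  linear_combination (4 ^ σ * ((i:ℝ) + 1) * A * ((3 / 2 - α + σ) * (3 - α))) * hp +
    (4 ^ σ * ((i:ℝ) + 1) * A * ph (α - σ - 1) i * (α - σ - 1 + i)) * hr

lemma gseq {y : ℝ} (hy : 0 < y) :
    Tendsto (fun M : ℕ => Real.Gamma (y + (M + 1 : ℕ)) / (M.factorial * (M:ℝ) ^ y)) atTop (nhds 1) := by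
  have h := (tendsto_const_nhds (x := Real.Gamma y)).div (Real.GammaSeq_tendsto_Gamma y) (Real.Gamma_pos_of_pos hy).ne'
  rw [div_self (Real.Gamma_pos_of_pos hy).ne'] at h
  refine h.congr fun M => ?_
  simp only [Pi.div_apply]
  rw [Gamma_ph hy]
  unfold Real.GammaSeq ph
  rw [div_div_eq_mul_div, mul_comm (Real.Gamma y), mul_comm ((M:ℝ)^y)]

lemma ss_tendsto {σ α : ℝ} (h0 : 0 < σ) (hα : α < 3/2) (i : ℕ) :
    Tendsto (fun M : ℕ => ss σ i (α - (M + 1 : ℕ))) atTop (nhds (4 ^ σ * ((i:ℝ) + 1) * (-1) ^ i)) := by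
  have hi : (0:ℝ) ≤ i := Nat.cast_nonneg i
  have p1 : 0 < 3/2 - α + σ := by linarith
  have p2 : 0 < 3 - α := by linarith
  have p3 : 0 < 3/2 - α := by linarith
  have p4 : 0 < i + 3 - α + σ := by linarith
  have hg := ((gseq p1).mul (gseq p2)).div ((gseq p3).mul (gseq p4)) (by norm_num)
  have hph : Tendsto (fun M : ℕ => ph (α - (M + 1 : ℕ) - σ) i / (M:ℝ) ^ i) atTop (nhds ((-1) ^ i)) := by
    have : Tendsto (fun M : ℕ => ∏ j ∈ Finset.range i, ((α - 1 - σ + j) / (M:ℝ) - 1)) atTop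
        (nhds (∏ j ∈ Finset.range i, (0 - 1))) := by
      apply tendsto_finsetProd
      intro j _
      exact ((tendsto_natCast_atTop_atTop).const_div_atTop _).sub_const 1
    rw [Finset.prod_const, Finset.card_range, zero_sub] at this
    refine this.congr' ?_
    filter_upwards [eventually_gt_atTop 0] with M hM
    have hM' : (M:ℝ) ≠ 0 := by positivity
    unfold ph
    have : (M:ℝ) ^ i = ∏ j ∈ Finset.range i, (M:ℝ) := by simp
    rw [this, ← Finset.prod_div_distrib]
    apply Finset.prod_congr rfl
    intro j _
    push_cast
    field_simp
    ring
  have := (hph.mul hg).const_mul (4 ^ σ * ((i:ℝ) + 1))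
  simp only [mul_one, div_one, Pi.div_apply] at this
  refine this.congr' ?_
  filter_upwards [eventually_gt_atTop 0] with M hM
  have hM' : (0:ℝ) < M := by positivity
  unfold ss
  have r : ∀ y : ℝ, (0:ℝ) < (M:ℝ) ^ y := fun y => Real.rpow_pos_of_pos hM' y
  have e : (M:ℝ) ^ (3/2 - α) * (M:ℝ) ^ (i + 3 - α + σ) =
      (M:ℝ)^i * ((M:ℝ) ^ (3/2 - α + σ) * (M:ℝ) ^ (3 - α)) := by
    rw [← Real.rpow_natCast, ← Real.rpow_add hM', ← Real.rpow_add hM', ← Real.rpow_add hM']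
    congr 1; ring
  have a1 : 3/2 - (α - (M+1:ℕ)) + σ = 3/2 - α + σ + (M+1:ℕ) := by ring
  have a2 : 3 - (α - (M+1:ℕ)) = 3 - α + (M+1:ℕ) := by ring
  have a3 : 3/2 - (α - (M+1:ℕ)) = 3/2 - α + (M+1:ℕ) := by ring
  have a4 : i + 3 - (α - (M+1:ℕ)) + σ = i + 3 - α + σ + (M+1:ℕ) := by ring
  rw [a1, a2, a3, a4]
  have G3 := Real.Gamma_pos_of_pos (show 0 < 3/2 - α + (M+1:ℕ) by positivity)
  have G4 := Real.Gamma_pos_of_pos (show 0 < i + 3 - α + σ + (M+1:ℕ) by positivity)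
  have f := M.factorial_pos
  have f' : (0:ℝ) < M.factorial := by exact_mod_cast f
  have r1 := r (3/2 - α + σ)
  have r2 := r (3 - α)
  have r3 := r (3/2 - α)
  have r4 := r (i + 3 - α + σ)
  generalize (M:ℝ) ^ (3/2 - α + σ) = R1 at *
  generalize (M:ℝ) ^ (3 - α) = R2 at *
  generalize (M:ℝ) ^ (3/2 - α) = R3 at *
  generalize (M:ℝ) ^ (i + 3 - α + σ) = R4 at *
  generalize Real.Gamma (3/2 - α + (M+1:ℕ)) = A3 at *
  generalize Real.Gamma (i + 3 - α + σ + (M+1:ℕ)) = A4 at *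
  generalize Real.Gamma (3/2 - α + σ + (M+1:ℕ)) = A1 at *
  generalize Real.Gamma (3 - α + (M+1:ℕ)) = A2 at *
  generalize ph (α - (M + 1 : ℕ) - σ) i = p at *
  have hMi : (0:ℝ) < (M:ℝ)^i := by positivity
  have : A1 / (↑M.factorial * R1) * (A2 / (↑M.factorial * R2)) / (A3 / (↑M.factorial * R3) * (A4 / (↑M.factorial * R4)))
    = (R3 * R4) / (R1 * R2) * (A1 * A2 / (A3 * A4)) := by field_simp
  rw [this, e]
  field_simp

lemma SS_tendsto {σ α : ℝ} (h0 : 0 < σ) (h1 : σ < 1) (hα : α < 3/2) (m : ℕ) :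
    Tendsto (fun M : ℕ => SS σ m (α - (M + 1 : ℕ))) atTop
      (nhds (∑' i : ℕ, Kker σ m (i + 1) * ((i:ℝ) + 1) * (-1) ^ i)) := by
  unfold SS
  refine tendsto_tsum_of_dominated_convergence (Kker_summable h0 h1 m) ?_ ?_
  · intro i
    apply Tendsto.const_mul
    unfold PP
    have : Tendsto (fun M : ℕ => ∏ j ∈ Finset.range i,
        ((α - (M + 1 : ℕ) + j) / (3 - (α - (M + 1 : ℕ)) + j))) atTop
        (nhds (∏ j ∈ Finset.range i, (-1 : ℝ))) := by
      apply tendsto_finsetProd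
      intro j _
      have hj : (0:ℝ) ≤ j := Nat.cast_nonneg j
      have := (((tendsto_natCast_atTop_atTop (R := ℝ)).atTop_add
        (tendsto_const_nhds (x := (4 - α + j)))).const_div_atTop (3 + 2 * j)).sub_const 1
      rw [zero_sub] at this
      refine this.congr fun M => ?_
      have hM : (0:ℝ) ≤ M := Nat.cast_nonneg M
      have n1 : (M:ℝ) + (4 - α + j) ≠ 0 := by linarith
      have n2 : 3 - (α - ((M:ℝ) + 1)) + j ≠ 0 := by linarith
      push_cast
      field_simp
      ring
    simpa using this
  · refine Eventually.of_forall fun M i => ?_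
    rw [Real.norm_eq_abs, abs_mul, abs_mul, abs_of_nonneg (show (0:ℝ) ≤ (i:ℝ) + 1 by positivity)]
    refine mul_le_of_le_one_right (by positivity) (PP_abs_le ?_ i)
    have : (0:ℝ) ≤ (M+1:ℕ) := Nat.cast_nonneg _
    linarith

lemma cross {σ α : ℝ} (h0 : 0 < σ) (h1 : σ < 1) (hα : α < 3/2) (hα1 : α < 1 + σ)
    (hne : α ≠ 1) (i : ℕ) (M : ℕ) : ∃ w : ℝ, SS σ (i+1) α = w * SS σ (i+1) (α - M) ∧
      ss σ i α = w * ss σ i (α - M) := by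
  induction M with
  | zero => exact ⟨1, by simp, by simp⟩
  | succ M ih =>
    obtain ⟨w, e1, e2⟩ := ih
    have hM : (0:ℝ) ≤ M := Nat.cast_nonneg M
    have hne' : α - M ≠ 1 := by
      rcases Nat.eq_zero_or_pos M with h | h
      · subst h; simpa using hne
      · have : (1:ℝ) ≤ M := by exact_mod_cast h
        intro h; linarith
    have a := SS_rec h0 h1 (i+1) (show α - M ≤ 3/2 by linarith) (by linarith) hne'
    have b := ss_rec h0 (show α - M < 3/2 by linarith) i
    have hD : (1 - (α - M - σ)) * (3/2 - (α - M - σ)) * (3 - (α - M)) ≠ 0 := by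
      have q1 : 0 < 1 - (α - M - σ) := by linarith
      have q2 : 0 < 3/2 - (α - M - σ) := by linarith
      have q3 : 0 < 3 - (α - M) := by linarith
      positivity
    set D := (1 - (α - M - σ)) * (3/2 - (α - M - σ)) * (3 - (α - M))
    set c := -((((i+1:ℕ):ℝ))^2 - (2 - (α - M - σ))^2) * (3/2 - (α - M))
    refine ⟨w * (c / D), ?_, ?_⟩
    · rw [e1, show α - ((M+1:ℕ):ℝ) = α - M - 1 by push_cast; ring, mul_assoc]
      congr 1
      field_simp
      linear_combination a
    · rw [e2, show α - ((M+1:ℕ):ℝ) = α - M - 1 by push_cast; ring, mul_assoc]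
      congr 1
      field_simp
      linear_combination b

lemma cross_lim {σ α : ℝ} (h0 : 0 < σ) (h1 : σ < 1) (hα : α < 3/2) (hα1 : α < 1 + σ)
    (hne : α ≠ 1) (i : ℕ) :
    SS σ (i+1) α * (4 ^ σ * ((i:ℝ) + 1) * (-1) ^ i) =
    ss σ i α * (∑' n : ℕ, Kker σ (i+1) (n + 1) * ((n:ℝ) + 1) * (-1) ^ n) := by
  refine tendsto_nhds_unique ((ss_tendsto h0 hα i).const_mul _)
    (((SS_tendsto h0 h1 hα (i+1)).const_mul _).congr fun M => ?_)
  obtain ⟨w, e1, e2⟩ := cross h0 h1 hα hα1 hne i (M+1)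
  rw [e1, e2]; ring

lemma kk_ph {σ : ℝ} (h0 : 0 < σ) (h1 : σ < 1) (i : ℕ) :
    kk σ i * Real.Gamma (i + 1 + σ) = kk σ 0 * Real.Gamma (1 + σ) * ph (0 - σ) i := by
  induction i with
  | zero => simp [ph]
  | succ i ih =>
    have h := kk_succ_nat h0 h1 i
    have hi : (i:ℝ) + 1 + σ ≠ 0 := by positivity
    rw [ph_succ, ← mul_assoc, ← ih, show ((i+1:ℕ):ℝ) + 1 + σ = i + 1 + σ + 1 by push_cast; ring,
      Real.Gamma_add_one hi]
    push_cast
    linear_combination Real.Gamma (i + 1 + σ) * h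

lemma ss_zero {σ : ℝ} (h0 : 0 < σ) (h1 : σ < 1) (i : ℕ) : SS σ (i+1) 0 = ss σ i 0 := by
  unfold SS
  rw [tsum_eq_single 0]
  · have hk := kk_ph h0 h1 i
    have a1 := kk_succ_nat h0 h1 i
    have a2 := kk_succ_nat h0 h1 (i+1)
    rw [Kker_eq, ← kk_neg]
    push_cast at a2 ⊢
    rw [show -((1:ℤ) - (i + 1)) = i by ring, show (1:ℤ) + (i + 1) = i + 1 + 1 by ring]
    have q0 : (0:ℝ) < (i:ℝ) + 1 + σ := by positivity
    have q1 : (0:ℝ) < (i:ℝ) + 2 + σ := by positivity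
    have g0 : Real.Gamma (1 + σ) ≠ 0 := (Real.Gamma_pos_of_pos (by linarith)).ne'
    have g : Real.Gamma (i + 3 - 0 + σ) = (i + 2 + σ) * ((i + 1 + σ) * Real.Gamma (i + 1 + σ)) := by
      rw [← Real.Gamma_add_one q0.ne', show (i:ℝ) + 1 + σ + 1 = i + 2 + σ by ring,
        ← Real.Gamma_add_one q1.ne']; ring_nf
    have G := Real.Gamma_pos_of_pos q0
    have k0 : kk σ 0 = Real.Gamma (2 * σ + 1) / (Real.Gamma (1 + σ) * Real.Gamma (1 + σ)) := by
      unfold kk rbinom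
      simp only [zpow_zero, one_mul, Int.cast_zero, add_zero]
      ring_nf
    have dup := Real.Gamma_mul_Gamma_add_half (1 + σ)
    have g32 : Real.Gamma (3/2) = √π / 2 := by
      rw [show (3/2:ℝ) = 1/2 + 1 by norm_num, Real.Gamma_add_one (by norm_num),
        Real.Gamma_one_half_eq]; ring
    have g2 : Real.Gamma (2 * (1 + σ)) = (2 * σ + 1) * Real.Gamma (2 * σ + 1) := by
      rw [← Real.Gamma_add_one (by linarith)]; ring_nf
    have g3 : Real.Gamma (3 - 0) = 2 := by
      rw [sub_zero]; simp
    have pw : (2:ℝ) ^ (1 - 2 * (1 + σ)) = 1 / (2 * 4 ^ σ) := by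
      rw [show 1 - 2 * (1 + σ) = -(1 + 2 * σ) by ring, Real.rpow_neg (by norm_num),
        Real.rpow_add (by norm_num), Real.rpow_mul (by norm_num)]
      norm_num
    have sp : 0 < √π := Real.sqrt_pos.2 Real.pi_pos
    have p4 : (0:ℝ) < 4 ^ σ := by positivity
    unfold ss
    rw [g, g3, show (3/2 - 0 + σ : ℝ) = 1 + σ + 1/2 by ring, sub_zero, g32]
    rw [g2, pw] at dup
    rw [k0] at hk
    have d2 : Real.Gamma (1 + σ + 1/2) = (2 * σ + 1) * Real.Gamma (2 * σ + 1) * (1 / (2 * 4 ^ σ)) * √π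
        / Real.Gamma (1 + σ) := by
      rw [eq_div_iff g0]; linear_combination dup
    rw [d2]
    have kk1 : kk σ ((i:ℤ) + 1) = kk σ i * (i - σ) / (i + 1 + σ) := by
      rw [eq_div_iff q0.ne']; linear_combination a1
    have kk2 : kk σ ((i:ℤ) + 1 + 1) = kk σ ((i:ℤ) + 1) * (i + 1 - σ) / (i + 2 + σ) := by
      rw [eq_div_iff q1.ne']; linear_combination a2
    have kk0 : kk σ (i:ℤ) = Real.Gamma (2 * σ + 1) / (Real.Gamma (1 + σ) * Real.Gamma (1 + σ)) *
      Real.Gamma (1 + σ) * ph (0 - σ) i / Real.Gamma (i + 1 + σ) := by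
      rw [eq_div_iff G.ne']; exact hk
    rw [kk2, kk1, kk0]
    simp only [PP, Finset.range_zero, Finset.prod_empty]
    field_simp
    ring
  · intro n hn
    have : PP 0 n = 0 := by
      unfold PP
      apply Finset.prod_eq_zero (Finset.mem_range.2 (Nat.pos_of_ne_zero hn))
      simp
    rw [this, mul_zero]

lemma ss_zero_ne {σ : ℝ} (h0 : 0 < σ) (h1 : σ < 1) (i : ℕ) : ss σ i 0 ≠ 0 := by
  unfold ss
  have : ph (0 - σ) i ≠ 0 := by
    unfold ph
    rw [Finset.prod_ne_zero_iff]
    intro j _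
    have := ne_int_aux h0 h1 (-j)
    push_cast at this
    intro hc; apply this; linarith
  have g1 := Real.Gamma_pos_of_pos (show 0 < 3/2 - 0 + σ by linarith)
  have g2 := Real.Gamma_pos_of_pos (show (0:ℝ) < 3 - 0 by norm_num)
  have g3 := Real.Gamma_pos_of_pos (show (0:ℝ) < 3/2 - 0 by norm_num)
  have hi : (0:ℝ) ≤ i := Nat.cast_nonneg i
  have g4 := Real.Gamma_pos_of_pos (show 0 < i + 3 - 0 + σ by linarith)
  positivity

lemma SS_eq {σ α : ℝ} (h0 : 0 < σ) (h1 : σ < 1) (hα : α < 3/2) (hα1 : α < 1 + σ)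
    (hne : α ≠ 1) (i : ℕ) : SS σ (i+1) α = ss σ i α := by
  have a := cross_lim h0 h1 (α := 0) (by norm_num) (by linarith) (by norm_num) i
  have b := cross_lim h0 h1 hα hα1 hne i
  rw [ss_zero h0 h1] at a
  have a' := mul_left_cancel₀ (ss_zero_ne h0 h1 i) a
  rw [← a'] at b
  refine mul_right_cancel₀ ?_ b
  have p4 : (0:ℝ) < 4 ^ σ := by positivity
  have : ((-1:ℝ)) ^ i ≠ 0 := by positivity
  positivity

lemma W_eq {σ α : ℝ} (h0 : 0 < σ) (hα : α < 3/2) (hα1 : σ < α) (i : ℕ) :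
    Wweight σ α (i+1) * (((i:ℝ)+1) * PP α i) = ss σ i α := by
  have hα0 : 0 < α := by linarith
  have hi : (0:ℝ) ≤ i := Nat.cast_nonneg i
  have e1 : Real.Gamma (((i+1:ℕ):ℝ) + α - σ - 1) = ph (α - σ) i * Real.Gamma (α - σ) := by
    rw [← Gamma_ph (by linarith)]; push_cast; ring_nf
  have e2 : Real.Gamma (((i+1:ℕ):ℝ) + α - 1) = ph α i * Real.Gamma α := by
    rw [← Gamma_ph (by linarith)]; push_cast; ring_nf
  have e3 : Real.Gamma (((i+1:ℕ):ℝ) - α + 2) = ph (3 - α) i * Real.Gamma (3 - α) := by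
    rw [← Gamma_ph (by linarith)]; push_cast; ring_nf
  have e4 : Real.Gamma (((i+1:ℕ):ℝ) - α + σ + 2) = Real.Gamma (i + 3 - α + σ) := by
    push_cast; ring_nf
  have hP : PP α i = ph α i / ph (3 - α) i := by
    unfold PP ph; rw [Finset.prod_div_distrib]
  have q1 : 0 < ph α i := Finset.prod_pos fun j _ => by positivity
  have q2 : 0 < ph (3 - α) i := Finset.prod_pos fun j _ => by
    have : (0:ℝ) ≤ j := Nat.cast_nonneg j
    linarith
  unfold Wweight ss
  rw [e1, e2, e3, e4, hP]
  have g1 := Real.Gamma_pos_of_pos (show 0 < α - σ by linarith)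
  have g2 := Real.Gamma_pos_of_pos hα0
  have g3 := Real.Gamma_pos_of_pos (show 0 < 3 / 2 - α by linarith)
  have g4 := Real.Gamma_pos_of_pos (show 0 < i + 3 - α + σ by linarith)
  field_simp

/-- the ground state -/
noncomputable def uu (α : ℝ) (n : ℕ) : ℝ := n * PP α (n - 1)

lemma uu_pos {α : ℝ} (h0 : 0 < α) (h3 : α < 3) (i : ℕ) : 0 < uu α (i + 1) := by
  unfold uu PP
  have : 0 < ∏ j ∈ Finset.range (i + 1 - 1), (α + (j:ℝ)) / (3 - α + j) :=
    Finset.prod_pos fun j _ => by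
      have : (0:ℝ) ≤ j := Nat.cast_nonneg j
      apply div_pos <;> linarith
  positivity

lemma super {σ α : ℝ} (h0 : 0 < σ) (h1 : σ < 1) (hα3 : α < 3/2) (hα1 : σ < α) (hα2 : α < 1 + σ)
    (hne : α ≠ 1) (L i : ℕ) (hi : i < L) :
    Wweight σ α (i+1) * uu α (i+1) ≤ ∑ n ∈ Finset.range (L + 1), Kker σ (i+1) n * uu α n := by
  have hW : Wweight σ α (i+1) * uu α (i+1) = SS σ (i+1) α := by
    rw [SS_eq h0 h1 hα3 hα2 hne, ← W_eq h0 hα3 hα1]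
    simp [uu]
  rw [hW, Finset.sum_range_succ']
  have e0 : Kker σ (i+1) 0 * uu α 0 = 0 := by simp [uu]
  rw [e0, add_zero]
  unfold SS
  rw [← (SS_summable h0 h1 (i+1) hα3.le).sum_add_tsum_nat_add L]
  have hneg : ∑' n : ℕ, Kker σ (i+1) (n + L + 1) * (((n + L : ℕ):ℝ) + 1) * PP α (n + L) ≤ 0 := by
    apply tsum_nonpos
    intro n
    have hK := Kker_nonpos h0 h1 (m := i+1) (n := n + L + 1) (by omega)
    have hu := uu_pos (show 0 < α by linarith) (by linarith) (n + L)
    have : Kker σ (i+1) (n + L + 1) * (((n + L : ℕ):ℝ) + 1) * PP α (n + L) =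
      Kker σ (i+1) (n + L + 1) * uu α (n + L + 1) := by simp [uu]; ring
    rw [this]
    exact mul_nonpos_of_nonpos_of_nonneg hK hu.le
  have heq : ∑ n ∈ Finset.range L, Kker σ (i+1) (n + 1) * ((n:ℝ) + 1) * PP α n =
      ∑ n ∈ Finset.range L, Kker σ (i+1) (n + 1) * uu α (n + 1) := by
    apply Finset.sum_congr rfl
    intro n _
    simp [uu]; ring
  rw [heq]
  linarith

lemma hardy_generic {σ α : ℝ} (h0 : 0 < σ) (h1 : σ < 1) (hα3 : α < 3/2) (hα1 : σ < α)
    (hα2 : α < 1 + σ) (hne : α ≠ 1) (f : ℕ → ℝ) (hf0 : f 0 = 0) (L : ℕ) :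
    ∑ n ∈ Finset.range (L + 1), Wweight σ α n * (f n) ^ 2 ≤
      ∑ m ∈ Finset.range (L + 1), ∑ n ∈ Finset.range (L + 1), Kker σ m n * f m * f n := by
  set u := uu α with hu
  set g : ℕ → ℝ := fun n => f n / u n with hg
  have hupos : ∀ i, 0 < u (i+1) := fun i => uu_pos (by linarith) (by linarith) i
  have hun : ∀ n, 0 ≤ u n := by
    intro n
    rcases n with _ | n
    · simp [hu, uu]
    · exact (hupos n).le
  have hfg : ∀ n, f n = g n * u n := by
    intro n
    rcases n with _ | n
    · simp [hg, hf0]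
    · simp only [hg]; rw [div_mul_cancel₀ _ (hupos n).ne']
  have step1 : ∑ n ∈ Finset.range (L + 1), Wweight σ α n * (f n) ^ 2 ≤
      ∑ m ∈ Finset.range (L + 1), ∑ n ∈ Finset.range (L + 1), Kker σ m n * u m * u n * (g m)^2 := by
    apply Finset.sum_le_sum
    intro m hm
    rcases m with _ | i
    · simp [hf0, hg]
    · have hs := super h0 h1 hα3 hα1 hα2 hne L i (by simpa using hm)
      have := mul_le_mul_of_nonneg_left hs (mul_nonneg (hun (i+1)) (sq_nonneg (g (i+1))))
      rw [hfg (i+1)]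
      calc _ = u (i+1) * g (i+1) ^ 2 * (Wweight σ α (i+1) * uu α (i+1)) := by rw [← hu]; ring
        _ ≤ _ := this
        _ = _ := by
          rw [Finset.mul_sum]
          apply Finset.sum_congr rfl
          intro n _
          rw [← hu]; ring
  have step2 : ∑ m ∈ Finset.range (L + 1), ∑ n ∈ Finset.range (L + 1), Kker σ m n * u m * u n * (g m)^2
     = ∑ m ∈ Finset.range (L + 1), ∑ n ∈ Finset.range (L + 1), Kker σ m n * u m * u n * (g n)^2 := by
    rw [Finset.sum_comm]
    refine Finset.sum_congr rfl fun m _ => Finset.sum_congr rfl fun n _ => ?_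
    rw [Kker_symm]; ring
  have step3 : ∑ m ∈ Finset.range (L + 1), ∑ n ∈ Finset.range (L + 1), Kker σ m n * u m * u n * (g m)^2
     + ∑ m ∈ Finset.range (L + 1), ∑ n ∈ Finset.range (L + 1), Kker σ m n * u m * u n * (g n)^2
     ≤ 2 * ∑ m ∈ Finset.range (L + 1), ∑ n ∈ Finset.range (L + 1), Kker σ m n * f m * f n := by
    rw [← Finset.sum_add_distrib, Finset.mul_sum]
    apply Finset.sum_le_sum
    intro m _
    rw [← Finset.sum_add_distrib, Finset.mul_sum]
    apply Finset.sum_le_sum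
    intro n _
    rw [hfg m, hfg n]
    by_cases hmn : m = n
    · subst hmn
      apply le_of_eq; ring
    · have hK := Kker_nonpos h0 h1 hmn
      have := mul_nonneg (mul_nonneg (mul_nonneg (neg_nonneg.2 hK) (hun m)) (hun n)) (sq_nonneg (g m - g n))
      nlinarith
  linarith

lemma inv_Gamma_continuous : Continuous (fun x : ℝ => (Real.Gamma x)⁻¹) := by
  have h := Complex.continuous_re.comp
    (Complex.differentiable_one_div_Gamma.continuous.comp Complex.continuous_ofReal)
  refine h.congr fun x => ?_
  simp only [Function.comp]
  rw [Complex.Gamma_ofReal, ← Complex.ofReal_inv, Complex.ofReal_re]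

lemma Gamma_contAt {x : ℝ} (hx : 0 < x) : ContinuousAt Real.Gamma x := by
  have := (inv_Gamma_continuous.continuousAt (x := x)).inv₀
    (inv_ne_zero (Real.Gamma_pos_of_pos hx).ne')
  refine this.congr (Eventually.of_forall fun y => ?_)
  simp

lemma K_cont {σ : ℝ} (h0 : 0 < σ) (m n : ℕ) : ContinuousAt (fun t : ℝ => Kker (σ - t) m n) 0 := by
  have key : ∀ c : ℝ, ContinuousAt (fun t : ℝ => rbinom (2 * (σ - t)) ((σ - t) + c)) 0 := by
    intro c
    have e : (fun t : ℝ => rbinom (2 * (σ - t)) ((σ - t) + c)) = fun t =>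
        Real.Gamma (2 * (σ - t) + 1) * ((Real.Gamma ((σ - t) + c + 1))⁻¹ *
          (Real.Gamma (2 * (σ - t) - ((σ - t) + c) + 1))⁻¹) := by
      funext t; unfold rbinom; rw [div_eq_mul_inv, mul_inv]
    rw [e]
    refine ContinuousAt.mul ?_ (ContinuousAt.mul ?_ ?_)
    · exact ContinuousAt.comp (f := fun t : ℝ => 2 * (σ - t) + 1) (g := Real.Gamma)
        (Gamma_contAt (by linarith)) (by fun_prop)
    · exact (inv_Gamma_continuous.comp (show Continuous fun t : ℝ => (σ - t) + c + 1 by fun_prop)).continuousAt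
    · exact (inv_Gamma_continuous.comp
        (show Continuous fun t : ℝ => 2 * (σ - t) - ((σ - t) + c) + 1 by fun_prop)).continuousAt
  unfold Kker
  have k1 := key (m - n)
  have k2 := key (m + n)
  simp only [← add_sub_assoc, ← add_assoc] at k1 k2
  exact continuousAt_const.mul (k1.sub k2)

lemma W_cont {σ α : ℝ} (h0 : 0 < σ) (hα3 : α < 3/2) (hα1 : σ < α) (i : ℕ) :
    ContinuousAt (fun t : ℝ => Wweight (σ - t) (α - t) (i+1)) 0 := by
  have hi : (0:ℝ) ≤ i := Nat.cast_nonneg i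
  have G : ∀ (h : ℝ → ℝ), Continuous h → 0 < h 0 → ContinuousAt (fun t => Real.Gamma (h t)) 0 :=
    fun h hc hp => ContinuousAt.comp (g := Real.Gamma) (Gamma_contAt hp) hc.continuousAt
  have nz : ∀ x : ℝ, 0 < x → Real.Gamma x ≠ 0 := fun x hx => (Real.Gamma_pos_of_pos hx).ne'
  unfold Wweight
  refine ContinuousAt.mul (ContinuousAt.mul ?_ (ContinuousAt.div (ContinuousAt.mul ?_ ?_)
    (ContinuousAt.mul ?_ ?_) ?_)) (ContinuousAt.div (ContinuousAt.mul ?_ ?_)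
    (ContinuousAt.mul ?_ ?_) ?_)
  · exact (Real.continuous_const_rpow (by norm_num)).continuousAt.comp
      (show ContinuousAt (fun t : ℝ => σ - t) 0 by fun_prop)
  · exact G _ (by fun_prop) (by linarith)
  · exact G _ (by fun_prop) (by linarith)
  · exact G _ (by fun_prop) (by linarith)
  · exact G _ (by fun_prop) (by linarith)
  · exact mul_ne_zero (nz _ (by linarith)) (nz _ (by linarith))
  · exact G _ (by fun_prop) (by push_cast; linarith)
  · exact G _ (by fun_prop) (by push_cast; linarith)
  · exact G _ (by fun_prop) (by push_cast; linarith)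
  · exact G _ (by fun_prop) (by push_cast; linarith)
  · exact mul_ne_zero (nz _ (by push_cast; linarith)) (nz _ (by push_cast; linarith))

/-- The Hardy inequality with weight `W_{α,σ}` for `(-Δ_ℕ)^σ`. -/
theorem stmt_2 (σ α : ℝ) (hσ0 : 0 < σ) (hσ1 : σ ≤ 1)
    (hα0 : 0 < α) (hα3 : α < 3/2) (hα1 : σ < α) (hα2 : α < 1 + σ)
    (f : ℕ → ℝ) (hf0 : f 0 = 0) (hf : (Function.support f).Finite) :
    (∑' n : ℕ, Wweight σ α n * (f n) ^ 2) ≤ Qform σ f := by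
  obtain ⟨L, hL⟩ : ∃ L : ℕ, ∀ n, n ∉ Finset.range (L + 1) → f n = 0 := by
    obtain ⟨L, hL⟩ := hf.bddAbove
    refine ⟨L, fun n hn => ?_⟩
    by_contra hc
    have := hL (show n ∈ Function.support f from hc)
    simp at hn
    omega
  have e1 : ∑' n : ℕ, Wweight σ α n * (f n) ^ 2 =
      ∑ n ∈ Finset.range (L + 1), Wweight σ α n * (f n) ^ 2 :=
    tsum_eq_sum fun n hn => by simp [hL n hn]
  have e2 : Qform σ f =
      ∑ m ∈ Finset.range (L + 1), ∑ n ∈ Finset.range (L + 1), Kker σ m n * f m * f n := by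
    unfold Qform
    rw [tsum_eq_sum (s := Finset.range (L+1)) fun m hm => by simp [hL m hm]]
    refine Finset.sum_congr rfl fun m _ => ?_
    exact tsum_eq_sum fun n hn => by simp [hL n hn]
  rw [e1, e2]
  have c1 : ContinuousAt (fun t : ℝ => ∑ n ∈ Finset.range (L + 1),
      Wweight (σ - t) (α - t) n * (f n) ^ 2) 0 := by
    refine tendsto_finsetSum _ fun n _ => ?_
    rcases n with _ | i
    · simp [hf0]
    · exact (W_cont hσ0 hα3 hα1 i).mul continuousAt_const
  have c2 : ContinuousAt (fun t : ℝ => ∑ m ∈ Finset.range (L + 1), ∑ n ∈ Finset.range (L + 1),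
      Kker (σ - t) m n * f m * f n) 0 := by
    refine tendsto_finsetSum _ fun m _ => tendsto_finsetSum _ fun n _ => ?_
    exact ((K_cont hσ0 m n).mul continuousAt_const).mul continuousAt_const
  have d1 := c1.tendsto.mono_left (nhdsWithin_le_nhds (s := Set.Ioi (0:ℝ)))
  have d2 := c2.tendsto.mono_left (nhdsWithin_le_nhds (s := Set.Ioi (0:ℝ)))
  simp only [sub_zero] at d1 d2
  refine le_of_tendsto_of_tendsto d1 d2 ?_
  have ev : ∀ᶠ t : ℝ in nhdsWithin 0 (Set.Ioi 0), t < σ :=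
    (eventually_lt_nhds hσ0).filter_mono nhdsWithin_le_nhds
  have ev2 : ∀ᶠ t : ℝ in nhdsWithin 0 (Set.Ioi 0), α - t ≠ 1 := by
    by_cases h : α = 1
    · filter_upwards [self_mem_nhdsWithin] with t ht
      have : 0 < t := ht
      intro hc; linarith
    · have : ∀ᶠ t : ℝ in nhds 0, α - t ≠ 1 :=
        (show ContinuousAt (fun t : ℝ => α - t) 0 by fun_prop).eventually_ne (by simpa using h)
      exact this.filter_mono nhdsWithin_le_nhds
  filter_upwards [ev, ev2, self_mem_nhdsWithin] with t ht1 ht2 ht3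
  have ht : 0 < t := ht3
  exact hardy_generic (by linarith) (by linarith) (by linarith) (by linarith) (by linarith) ht2 f hf0 L
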